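/- Let n ≥ 1, κ > 0, m > 0, α > 0. Let M : ℝ → Matrix (Fin n) (Fin n) ℝ be differentiable with M(t) symmetric positive definite for all t, C : ℝ → Matrix (Fin n) (Fin n) ℝ with M'(t) − 2C(t) skew-symmetric for all t, J : ℝ → Matrix (Fin 3) (Fin n) ℝ differentiable with J(t)·M(t)⁻¹·J(t)ᵀ = (1/m)·I₃ for all t, v : ℝ → ℝⁿ differentiable, τ_g, τ_ext : ℝ → ℝⁿ, u₂ : ℝ → ℝ³, and y₁, y₂ : ℝ → ℝ³ differentiable with y₁' = J·v and y₂' = u₂. Let K_D be a symmetric positive definite n×n matrix, and assume the dynamics M(t)v'(t) + C(t)v(t) + τ_g(t) = u(t) + τ_ext(t) hold with the interface u(t) = τ_g(t) − 2κ·J(t)ᵀ(y₁(t) − y₂(t)) − K_D(v(t) − J(t)ᵀu₂(t)). Assume furthermore that (1/κ)·K_D − α·m·J(t)ᵀJ(t) − α·M(t) is positive semidefinite for all t. Define V(t) := (1/(2κ))⟨v(t), M(t)v(t)⟩ + ‖y₁(t) − y₂(t)‖² + α·m·⟨J(t)v(t), y₁(t) − y₂(t)⟩, and define OT(t) := ⟨z₁(t),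 y₁(t) − y₂(t)⟩ + ⟨z₂(t), u₂(t)⟩ + (1/κ)⟨v(t), τ_ext(t)⟩, where z₁(t) := −2u₂(t) + α·m·J'(t)v(t) + α·m·J(t)M(t)⁻¹K_D(J(t)ᵀu₂(t) − v(t)) + α·m·J(t)M(t)⁻¹(τ_ext(t) − C(t)v(t)) + 2α²κ·m·J(t)v(t), and z₂(t) := (1/κ)·J(t)K_D v(t) − α·m·J(t)v(t). Then for all t, V'(t) ≤ −2ακ·V(t) + OT(t). -/

import Mathlib

open Matrix

/-!
Along the closed loop, skew-symmetry of `M' - 2C` makes `⟨v, M v' + C v⟩` half the derivative of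
`⟨v, M v⟩`, and the coupling force `-2κ Jᵀ(y₁ - y₂)` does exactly the work that cancels the
`⟨J v, y₁ - y₂⟩` part of the derivative of `‖y₁ - y₂‖²`. Since `J M⁻¹ Jᵀ = (1/m) I`, the same force
enters the derivative of the cross term `αm⟨J v, y₁ - y₂⟩` as `-2ακ‖y₁ - y₂‖²`, which supplies the
decay of the task-space error. Collecting terms gives the identity
`V' = -2ακ V + OT - ⟨v, ((1/κ) K_D - αm JᵀJ - αM) v⟩`, whose last term is nonpositive.
-/

section Calculus

variable {𝕜 𝔸 m n : Type*} [NontriviallyNormedField 𝕜] [NormedRing 𝔸] [NormedAlgebra 𝕜 𝔸]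
  [Fintype n] {t : 𝕜}

lemma hasDerivAt_dotProduct {f g : 𝕜 → n → 𝔸} {f' g' : n → 𝔸}
    (hf : HasDerivAt f f' t) (hg : HasDerivAt g g' t) :
    HasDerivAt (fun s => f s ⬝ᵥ g s) (f' ⬝ᵥ g t + f t ⬝ᵥ g') t := by
  rw [hasDerivAt_pi] at hf hg
  simp only [dotProduct, ← Finset.sum_add_distrib]
  exact HasDerivAt.fun_sum fun i _ => (hf i).mul (hg i)

lemma hasDerivAt_mulVec {A : 𝕜 → Matrix m n 𝔸} {A' : Matrix m n 𝔸}
    {x : 𝕜 → n → 𝔸} {x' : n → 𝔸}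
    (hA : ∀ i j, HasDerivAt (fun s => A s i j) (A' i j) t) (hx : HasDerivAt x x' t) :
    HasDerivAt (fun s => A s *ᵥ x s) (A' *ᵥ x t + A t *ᵥ x') t :=
  hasDerivAt_pi.2 fun i => hasDerivAt_dotProduct (hasDerivAt_pi.2 (hA i)) hx

end Calculus

lemma dotProduct_mulVec_self_eq_zero_of_transpose_eq_neg {R n : Type*} [CommRing R]
    [IsAddTorsionFree R] [Fintype n] {A : Matrix n n R} (hA : Aᵀ = -A) (x : n → R) :
    x ⬝ᵥ A *ᵥ x = 0 := by
  rw [← self_eq_neg]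
  calc x ⬝ᵥ A *ᵥ x = x ⬝ᵥ Aᵀ *ᵥ x := (dotProduct_transpose_mulVec A x x).symm
    _ = -(x ⬝ᵥ A *ᵥ x) := by rw [hA, neg_mulVec, dotProduct_neg]

section ClosedLoop

variable {n k : Type*} [Fintype n] [Fintype k]

/-- The Lyapunov-like function `V` at a given time: kinetic energy scaled by `1/κ`, squared
task-space error `e = y₁ - y₂`, and the pairing of the task velocity `J v` with `e`, weighted by `β`
(which is `αm` in the paper). -/
noncomputable def lyapunov (κ β : ℝ) (M : Matrix n n ℝ) (J : Matrix k n ℝ) (v : n → ℝ)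
    (e : EuclideanSpace ℝ k) : ℝ :=
  (1 / (2 * κ)) * (v ⬝ᵥ M *ᵥ v) + ‖e‖ ^ 2 + β * (J *ᵥ v ⬝ᵥ e)

/-- The offset `OT = ⟨z₁, e⟩ + ⟨z₂, u₂⟩ + (1/κ)⟨v, τ_ext⟩` of the dissipation inequality, with `z₁`
and `z₂` written out, `K` the damping gain `K_D` and `J'` the derivative of `J`. -/
noncomputable def offset [DecidableEq n] (κ m α : ℝ) (M C K : Matrix n n ℝ) (J J' : Matrix k n ℝ)
    (v τext : n → ℝ) (u₂ e : k → ℝ) : ℝ :=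
  ((-2 : ℝ) • u₂ + (α * m) • J' *ᵥ v + (α * m) • J *ᵥ (M⁻¹ *ᵥ (K *ᵥ (Jᵀ *ᵥ u₂ - v)))
      + (α * m) • J *ᵥ (M⁻¹ *ᵥ (τext - C *ᵥ v)) + (2 * α ^ 2 * κ * m) • J *ᵥ v) ⬝ᵥ e
    + ((1 / κ) • J *ᵥ (K *ᵥ v) - (α * m) • J *ᵥ v) ⬝ᵥ u₂
    + (1 / κ) * (v ⬝ᵥ τext)

/-- The matrix `(1/κ) K - αm JᵀJ - αM`, the damping left over once the decay rate `2ακ` of the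
Lyapunov-like function is paid for. -/
noncomputable def dampingMargin (κ m α : ℝ) (M K : Matrix n n ℝ) (J : Matrix k n ℝ) :
    Matrix n n ℝ :=
  (1 / κ) • K - (α * m) • (Jᵀ * J) - α • M

lemma dotProduct_dampingMargin_mulVec (κ m α : ℝ) (M K : Matrix n n ℝ) (J : Matrix k n ℝ)
    (v : n → ℝ) :
    v ⬝ᵥ dampingMargin κ m α M K J *ᵥ v =
      (1 / κ) * (v ⬝ᵥ K *ᵥ v) - (α * m) * (J *ᵥ v ⬝ᵥ J *ᵥ v) - α * (v ⬝ᵥ M *ᵥ v) := by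
  simp only [dampingMargin, sub_mulVec, smul_mulVec, dotProduct_sub, dotProduct_smul, smul_eq_mul,
    ← mulVec_mulVec, dotProduct_transpose_mulVec]

section Derivatives

variable {t : ℝ} {M : ℝ → Matrix n n ℝ} {M' C : Matrix n n ℝ} {v : ℝ → n → ℝ} {v' : n → ℝ}

lemma hasDerivAt_dotProduct_mulVec_self_of_skew
    (hM : ∀ i j, HasDerivAt (fun s => M s i j) (M' i j) t) (hMsymm : (M t).IsSymm)
    (hskew : (M' - (2 : ℝ) • C)ᵀ = -(M' - (2 : ℝ) • C)) (hv : HasDerivAt v v' t) :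
    HasDerivAt (fun s => v s ⬝ᵥ M s *ᵥ v s) (2 * (v t ⬝ᵥ (M t *ᵥ v' + C *ᵥ v t))) t := by
  have hsymm : v' ⬝ᵥ M t *ᵥ v t = v t ⬝ᵥ M t *ᵥ v' := by
    rw [← dotProduct_transpose_mulVec, hMsymm.eq]
  have hcoriolis : v t ⬝ᵥ M' *ᵥ v t = 2 * (v t ⬝ᵥ C *ᵥ v t) := by
    have hzero := dotProduct_mulVec_self_eq_zero_of_transpose_eq_neg hskew (v t)
    rwa [sub_mulVec, smul_mulVec, dotProduct_sub, dotProduct_smul, smul_eq_mul, sub_eq_zero]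
      at hzero
  refine (hasDerivAt_dotProduct hv (hasDerivAt_mulVec hM hv)).congr_deriv ?_
  rw [dotProduct_add, dotProduct_add, hsymm, hcoriolis]
  ring

lemma hasDerivAt_lyapunov (κ β : ℝ) {J : ℝ → Matrix k n ℝ} {J' : Matrix k n ℝ}
    {e : ℝ → EuclideanSpace ℝ k} {e' : EuclideanSpace ℝ k}
    (hM : ∀ i j, HasDerivAt (fun s => M s i j) (M' i j) t) (hMsymm : (M t).IsSymm)
    (hskew : (M' - (2 : ℝ) • C)ᵀ = -(M' - (2 : ℝ) • C))
    (hJ : ∀ i j, HasDerivAt (fun s => J s i j) (J' i j) t)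
    (hv : HasDerivAt v v' t) (he : HasDerivAt e e' t) :
    HasDerivAt (fun s => lyapunov κ β (M s) (J s) (v s) (e s))
      ((1 / κ) * (v t ⬝ᵥ (M t *ᵥ v' + C *ᵥ v t)) + 2 * (e' ⬝ᵥ e t)
        + β * ((J' *ᵥ v t + J t *ᵥ v') ⬝ᵥ e t + J t *ᵥ v t ⬝ᵥ e')) t := by
  have hkinetic :=
    (hasDerivAt_dotProduct_mulVec_self_of_skew hM hMsymm hskew hv).const_mul (1 / (2 * κ))
  have herror : HasDerivAt (fun s => ‖e s‖ ^ 2) (2 * (e' ⬝ᵥ e t)) t := by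
    simpa [EuclideanSpace.inner_eq_star_dotProduct] using he.norm_sq
  have hofLp : HasDerivAt (fun s => (e s).ofLp) e'.ofLp t :=
    (PiLp.hasFDerivAt_ofLp 2 (e t)).comp_hasDerivAt t he
  have hcross := (hasDerivAt_dotProduct (hasDerivAt_mulVec hJ hv) hofLp).const_mul β
  refine ((hkinetic.add herror).add hcross).congr_deriv ?_
  ring

end Derivatives

variable {κ m : ℝ} {M C K : Matrix n n ℝ} {J : Matrix k n ℝ} {v v' τext : n → ℝ} {u₂ e : k → ℝ}

lemma closedLoop_power (hK : K.IsSymm)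
    (hloop : M *ᵥ v' + C *ᵥ v = τext - (2 * κ) • Jᵀ *ᵥ e - K *ᵥ (v - Jᵀ *ᵥ u₂)) :
    v ⬝ᵥ (M *ᵥ v' + C *ᵥ v) =
      v ⬝ᵥ τext - 2 * κ * (J *ᵥ v ⬝ᵥ e) - v ⬝ᵥ K *ᵥ v + J *ᵥ (K *ᵥ v) ⬝ᵥ u₂ := by
  have hdamping : v ⬝ᵥ K *ᵥ (Jᵀ *ᵥ u₂) = J *ᵥ (K *ᵥ v) ⬝ᵥ u₂ := by
    rw [← hK.eq, dotProduct_transpose_mulVec, hK.eq, dotProduct_comm, dotProduct_transpose_mulVec,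
      dotProduct_comm]
  rw [hloop, mulVec_sub, dotProduct_sub, dotProduct_sub, dotProduct_sub, dotProduct_smul,
    dotProduct_transpose_mulVec, dotProduct_comm e, hdamping, smul_eq_mul]
  ring

lemma closedLoop_taskAcceleration [DecidableEq n] [DecidableEq k] (hm : m ≠ 0) (hM : IsUnit M)
    (hJM : J * M⁻¹ * Jᵀ = (1 / m) • (1 : Matrix k k ℝ))
    (hloop : M *ᵥ v' + C *ᵥ v = τext - (2 * κ) • Jᵀ *ᵥ e - K *ᵥ (v - Jᵀ *ᵥ u₂)) :
    m • J *ᵥ v' = m • J *ᵥ (M⁻¹ *ᵥ (K *ᵥ (Jᵀ *ᵥ u₂ - v)))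
      + m • J *ᵥ (M⁻¹ *ᵥ (τext - C *ᵥ v)) - (2 * κ) • e := by
  have hforce : M *ᵥ v' = K *ᵥ (Jᵀ *ᵥ u₂ - v) + (τext - C *ᵥ v) - (2 * κ) • Jᵀ *ᵥ e := by
    rw [eq_sub_of_add_eq hloop, mulVec_sub, mulVec_sub]
    abel
  have hv' : v' = M⁻¹ *ᵥ (M *ᵥ v') := by
    rw [mulVec_mulVec, nonsing_inv_mul _ ((isUnit_iff_isUnit_det M).1 hM), one_mulVec]
  have hcoupling : m • J *ᵥ (M⁻¹ *ᵥ (Jᵀ *ᵥ e)) = e := by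
    rw [mulVec_mulVec, mulVec_mulVec, hJM, smul_mulVec, one_mulVec, smul_smul,
      mul_one_div_cancel hm, one_smul]
  rw [hv', hforce]
  simp only [mulVec_sub M⁻¹ (_ + _), mulVec_add, mulVec_sub J (_ + _), mulVec_smul, smul_sub,
    smul_add, smul_comm m (2 * κ), hcoupling]

lemma closedLoop_dissipation [DecidableEq n] [DecidableEq k] (α : ℝ) (J' : Matrix k n ℝ)
    {e : EuclideanSpace ℝ k} (hκ : κ ≠ 0) (hm : m ≠ 0) (hM : IsUnit M)
    (hJM : J * M⁻¹ * Jᵀ = (1 / m) • (1 : Matrix k k ℝ)) (hK : K.IsSymm)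
    (hloop : M *ᵥ v' + C *ᵥ v = τext - (2 * κ) • Jᵀ *ᵥ e - K *ᵥ (v - Jᵀ *ᵥ u₂)) :
    (1 / κ) * (v ⬝ᵥ (M *ᵥ v' + C *ᵥ v)) + 2 * ((J *ᵥ v - u₂) ⬝ᵥ e)
        + (α * m) * ((J' *ᵥ v + J *ᵥ v') ⬝ᵥ e + J *ᵥ v ⬝ᵥ (J *ᵥ v - u₂)) =
      -(2 * α * κ) * lyapunov κ (α * m) M J v e + offset κ m α M C K J J' v τext u₂ e
        - v ⬝ᵥ dampingMargin κ m α M K J *ᵥ v := by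
  have hnorm : ‖e‖ ^ 2 = e ⬝ᵥ e := by
    rw [EuclideanSpace.real_norm_sq_eq]
    simp only [dotProduct, sq]
  have hacceleration : m * (J *ᵥ v' ⬝ᵥ e) =
      m * (J *ᵥ (M⁻¹ *ᵥ (K *ᵥ (Jᵀ *ᵥ u₂ - v))) ⬝ᵥ e)
        + m * (J *ᵥ (M⁻¹ *ᵥ (τext - C *ᵥ v)) ⬝ᵥ e) - 2 * κ * (e ⬝ᵥ e) := by
    simpa only [add_dotProduct, sub_dotProduct, smul_dotProduct, smul_eq_mul] using
      congrArg (· ⬝ᵥ e.ofLp) (closedLoop_taskAcceleration hm hM hJM hloop)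
  rw [closedLoop_power hK hloop, dotProduct_dampingMargin_mulVec, lyapunov, offset, hnorm]
  simp only [add_dotProduct, sub_dotProduct, dotProduct_sub, smul_dotProduct, smul_eq_mul]
  field_simp
  linear_combination α * κ * hacceleration

end ClosedLoop

theorem stmt_6_general {n k : Type*} [Fintype n] [DecidableEq n] [Fintype k] [DecidableEq k]
    {κ m : ℝ} (α : ℝ) (hκ : κ ≠ 0) (hm : m ≠ 0) {t : ℝ}
    {M : ℝ → Matrix n n ℝ} {M' C K : Matrix n n ℝ} {J : ℝ → Matrix k n ℝ} {J' : Matrix k n ℝ}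
    {v : ℝ → n → ℝ} {v' τg τext : n → ℝ}
    {y₁ y₂ : ℝ → EuclideanSpace ℝ k} {u₂ : EuclideanSpace ℝ k}
    (hM : ∀ i j, HasDerivAt (fun s => M s i j) (M' i j) t)
    (hMsymm : (M t).IsSymm) (hMunit : IsUnit (M t))
    (hskew : (M' - (2 : ℝ) • C)ᵀ = -(M' - (2 : ℝ) • C))
    (hJ : ∀ i j, HasDerivAt (fun s => J s i j) (J' i j) t)
    (hJM : J t * (M t)⁻¹ * (J t)ᵀ = (1 / m) • (1 : Matrix k k ℝ))
    (hv : HasDerivAt v v' t)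
    (hy₁ : HasDerivAt y₁ (WithLp.toLp 2 (J t *ᵥ v t)) t) (hy₂ : HasDerivAt y₂ u₂ t)
    (hK : K.IsSymm)
    (hdyn : M t *ᵥ v' + C *ᵥ v t + τg =
      (τg - (2 * κ) • (J t)ᵀ *ᵥ (y₁ t - y₂ t) - K *ᵥ (v t - (J t)ᵀ *ᵥ u₂)) + τext) :
    HasDerivAt (fun s => lyapunov κ (α * m) (M s) (J s) (v s) (y₁ s - y₂ s))
      (-(2 * α * κ) * lyapunov κ (α * m) (M t) (J t) (v t) (y₁ t - y₂ t)
        + offset κ m α (M t) C K (J t) J' (v t) τext u₂ (y₁ t - y₂ t)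
        - v t ⬝ᵥ dampingMargin κ m α (M t) K (J t) *ᵥ v t) t := by
  have hloop : M t *ᵥ v' + C *ᵥ v t =
      τext - (2 * κ) • (J t)ᵀ *ᵥ (y₁ t - y₂ t) - K *ᵥ (v t - (J t)ᵀ *ᵥ u₂) := by
    rw [eq_sub_of_add_eq hdyn]
    abel
  exact (hasDerivAt_lyapunov κ (α * m) hM hMsymm hskew hJ hv (hy₁.sub hy₂)).congr_deriv
    (closedLoop_dissipation α J' hκ hm hMunit hJM hK hloop)

/-- key dissipation inequality in the proof of Theorem 1: under the
energy-shaping interface, with `J M⁻¹ Jᵀ = (1/m) I₃` and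
`(1/κ)K_D − αm JᵀJ − αM ⪰ 0`, the Lyapunov-like function
`V = (1/(2κ))⟨v, M v⟩ + ‖y₁ − y₂‖² + αm⟨J v, y₁ − y₂⟩` satisfies
`V̇ ≤ −2ακ V + OT` where `OT = ⟨z₁, y₁ − y₂⟩ + ⟨z₂, u₂⟩ + (1/κ)⟨v, τ_ext⟩`. -/
theorem stmt_6 (n : ℕ) (hn : 1 ≤ n) (κ m α : ℝ) (hκ : 0 < κ) (hm : 0 < m) (hα : 0 < α)
    (M M' : ℝ → Matrix (Fin n) (Fin n) ℝ)
    (hM : ∀ t i j, HasDerivAt (fun s => M s i j) (M' t i j) t)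
    (hMsymm : ∀ t, (M t).IsSymm) (hMpd : ∀ t, (M t).PosDef)
    (C : ℝ → Matrix (Fin n) (Fin n) ℝ)
    (hskew : ∀ t, (M' t - (2 : ℝ) • C t)ᵀ = -(M' t - (2 : ℝ) • C t))
    (J J' : ℝ → Matrix (Fin 3) (Fin n) ℝ)
    (hJ : ∀ t i j, HasDerivAt (fun s => J s i j) (J' t i j) t)
    (hJM : ∀ t, J t * (M t)⁻¹ * (J t)ᵀ = (1 / m) • (1 : Matrix (Fin 3) (Fin 3) ℝ))
    (v v' : ℝ → Fin n → ℝ) (hv : ∀ t, HasDerivAt v (v' t) t)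
    (τg τext : ℝ → Fin n → ℝ)
    (u₂ : ℝ → EuclideanSpace ℝ (Fin 3))
    (y₁ y₂ : ℝ → EuclideanSpace ℝ (Fin 3))
    (hy₁ : ∀ t, HasDerivAt y₁ (WithLp.toLp 2 ((J t).mulVec (v t))) t)
    (hy₂ : ∀ t, HasDerivAt y₂ (u₂ t) t)
    (K_D : Matrix (Fin n) (Fin n) ℝ) (hKD : K_D.IsSymm) (hKDpd : K_D.PosDef)
    (hdyn : ∀ t, (M t).mulVec (v' t) + (C t).mulVec (v t) + τg t =
      (τg t - (2 * κ) • (J t)ᵀ.mulVec (y₁ t - y₂ t)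
        - K_D.mulVec (v t - (J t)ᵀ.mulVec (u₂ t))) + τext t)
    (hpsd : ∀ t, ((1 / κ) • K_D - (α * m) • ((J t)ᵀ * J t) - α • M t).PosSemidef) :
    ∀ t : ℝ,
      deriv (fun s =>
        (1 / (2 * κ)) * (v s ⬝ᵥ (M s).mulVec (v s)) + ‖y₁ s - y₂ s‖ ^ 2
          + (α * m) * ((J s).mulVec (v s) ⬝ᵥ (y₁ s - y₂ s))) t
      ≤ -(2 * α * κ) *
          ((1 / (2 * κ)) * (v t ⬝ᵥ (M t).mulVec (v t)) + ‖y₁ t - y₂ t‖ ^ 2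
            + (α * m) * ((J t).mulVec (v t) ⬝ᵥ (y₁ t - y₂ t)))
        + (((-2 : ℝ) • (fun i => u₂ t i)
            + (α * m) • (J' t).mulVec (v t)
            + (α * m) • (J t).mulVec ((M t)⁻¹.mulVec
                (K_D.mulVec ((J t)ᵀ.mulVec (u₂ t) - v t)))
            + (α * m) • (J t).mulVec ((M t)⁻¹.mulVec (τext t - (C t).mulVec (v t)))
            + (2 * α ^ 2 * κ * m) • (J t).mulVec (v t)) ⬝ᵥ (y₁ t - y₂ t)
          + ((1 / κ) • (J t).mulVec (K_D.mulVec (v t))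
              - (α * m) • (J t).mulVec (v t)) ⬝ᵥ u₂ t
          + (1 / κ) * (v t ⬝ᵥ τext t)) := by
  intro t
  exact (stmt_6_general α hκ.ne' hm.ne' (hM t) (hMsymm t) (hMpd t).isUnit (hskew t) (hJ t) (hJM t)
    (hv t) (hy₁ t) (hy₂ t) hKD (hdyn t)).deriv.trans_le
      (sub_le_self _ ((hpsd t).dotProduct_mulVec_nonneg (v t)))
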